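/- Every POMDP Γ = (K, A, S, q, g) with a finite nonempty set of states K has a general uniform value: there exists v* : Δ(K) → ℝ such that for every ε > 0 there is α > 0 and, for each initial probability p ∈ Δ(K), a behavioral strategy σ(p), so that for every evaluation θ with I(θ) ≤ α and every p ∈ Δ(K): |v_θ(p) − v*(p)| ≤ ε and γ_θ(p, σ(p)) ≥ v*(p) − ε. -/

import Mathlib

open Set

namespace Stmt18

variable {K A S : Type*} [Fintype K]

/-- The simplex `Δ(K)` of probability vectors on `K`. -/
def ΔK (K : Type*) [Fintype K] : Set (K → ℝ) := {p | (∀ k, 0 ≤ p k) ∧ ∑ k, p k = 1}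

/-- `Δ_f`: finitely supported probability measures, as weight functions. -/
def Δf (A : Type*) : Set (A →₀ ℝ) := {u | (∀ a, 0 ≤ u a) ∧ u.sum (fun _ r => r) = 1}

/-- Behavioral strategies in the POMDP: the played mixed action only depends on the
past actions and signals. -/
def IsStrat (σ : List (A × S) → (A →₀ ℝ)) : Prop := ∀ h, σ h ∈ Δf A

/-- The (finitely supported) joint distribution at time `t` of the pair
(history of actions and signals up to stage `t`, unobserved state at stage `t+1`),
for initial distribution `p₁` and strategy `σ`. -/
noncomputable def hist (q : K → A → (S × K →₀ ℝ)) (σ : List (A × S) → (A →₀ ℝ))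
    (p₁ : K → ℝ) : ℕ → (List (A × S) × K →₀ ℝ)
  | 0 => ∑ k, Finsupp.single (([] : List (A × S)), k) (p₁ k)
  | t + 1 => (hist q σ p₁ t).sum fun hk w =>
      (σ hk.1).sum fun a pa =>
        (q hk.2 a).sum fun sk pr =>
          Finsupp.single (hk.1 ++ [(a, sk.1)], sk.2) (w * pa * pr)

/-- The expected payoff `E_{p₁,σ}(g(k_{t+1}, a_{t+1}))` at stage `t+1`. -/
noncomputable def stagePay (q : K → A → (S × K →₀ ℝ)) (g : K → A → ℝ)
    (σ : List (A × S) → (A →₀ ℝ)) (p₁ : K → ℝ) (t : ℕ) : ℝ :=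
  (hist q σ p₁ t).sum fun hk w => (σ hk.1).sum fun a pa => w * pa * g hk.2 a

/-- An evaluation: a probability distribution `θ = (θ_t)_{t ≥ 1}` over stages
(indexed here by `t : ℕ`, `t` standing for stage `t+1`). -/
def IsEval (θ : ℕ → ℝ) : Prop := (∀ t, 0 ≤ θ t) ∧ ∑' t, θ t = 1

/-- The impatience `I(θ) = Σ_{t≥1} |θ_{t+1} − θ_t|`. -/
noncomputable def impatience (θ : ℕ → ℝ) : ℝ := ∑' t, |θ (t + 1) - θ t|

/-- The `θ`-payoff `γ_θ(p₁,σ) = E_{p₁,σ}(Σ_t θ_t g(k_t,a_t))`. -/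
noncomputable def payoff (q : K → A → (S × K →₀ ℝ)) (g : K → A → ℝ)
    (θ : ℕ → ℝ) (σ : List (A × S) → (A →₀ ℝ)) (p₁ : K → ℝ) : ℝ :=
  ∑' t, θ t * stagePay q g σ p₁ t

/-- The `θ`-value `v_θ(p₁) = sup_σ γ_θ(p₁,σ)`. -/
noncomputable def value (q : K → A → (S × K →₀ ℝ)) (g : K → A → ℝ)
    (θ : ℕ → ℝ) (p₁ : K → ℝ) : ℝ :=
  sSup {c : ℝ | ∃ σ, IsStrat σ ∧ c = payoff q g θ σ p₁}

end Stmt18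

/-!
The value functions `v_θ` are equi-Lipschitz on `Δ(K)`, hence relatively compact for the supremum
distance (Arzelà–Ascoli). Delaying an evaluation of small impatience by a few stages, or replacing
it by a mixture of translates of a fixed evaluation, barely changes weighted sums of stage payoffs.
Let `z` be a cluster point of `v_θ` as the impatience tends to `0`, and let `v_θ'` be close to `z`.
No strategy gets more than about `z p` under a translate of `θ'`, because after any number of stages
it could still switch to a strategy which is good for a far more patient evaluation. So it gets no
more than about `z p` under any patient evaluation: `z` dominates every other cluster point, and
`v_θ` converges to a limit `v*`.

A good strategy is built block by block. By the minimax theorem, if every evaluation in a convex set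
can be secured by some strategy, then finitely many of them can be secured by a single one. Here the
evaluations are the mean over the next `N` stages and a finite net of patient evaluations delayed
by `N`: the first makes the block profitable, the others ensure that the play can be continued in
the same way. The payoffs achieved form a convex set, since behavioral strategies can be mixed
(Kuhn).
-/

namespace Stmt18

section Mean

variable {A : Type*} {u v : A →₀ ℝ} {f f' : A → ℝ} {b l : ℝ}

/-- The integral `∑ a, u a * f a` of `f` against finitely supported, possibly signed, weights `u`:
an expectation when `u ∈ Δf A`. -/
noncomputable def mean (u : A →₀ ℝ) (f : A → ℝ) : ℝ := Finsupp.linearCombination ℝ f u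

lemma mean_eq_sum (u : A →₀ ℝ) (f : A → ℝ) : mean u f = ∑ a ∈ u.support, u a * f a := rfl

lemma mean_eq_sum_of_support_subset {s : Finset A} (hs : u.support ⊆ s) (f : A → ℝ) :
    mean u f = ∑ a ∈ s, u a * f a :=
  Finsupp.sum_of_support_subset u hs _ fun _ _ => zero_smul _ _

lemma mean_const (hu : u ∈ Δf A) (b : ℝ) : (mean u fun _ => b) = b := by
  rw [mean_eq_sum, ← Finset.sum_mul]
  exact (congrArg (· * b) hu.2).trans (one_mul b)

lemma mean_sub (u : A →₀ ℝ) (f f' : A → ℝ) :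
    (mean u fun a => f a - f' a) = mean u f - mean u f' := by
  simp only [mean_eq_sum, mul_sub, Finset.sum_sub_distrib]

lemma mean_mul_left (u : A →₀ ℝ) (r : ℝ) (f : A → ℝ) :
    (mean u fun a => r * f a) = r * mean u f := by
  simp only [mean_eq_sum, Finset.mul_sum, mul_left_comm]

lemma mean_mono (hu : u ∈ Δf A) (h : ∀ a, f a ≤ f' a) : mean u f ≤ mean u f' :=
  Finset.sum_le_sum fun a _ => mul_le_mul_of_nonneg_left (h a) (hu.1 a)

lemma mean_nonneg (hu : u ∈ Δf A) (h : ∀ a, 0 ≤ f a) : 0 ≤ mean u f :=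
  (mean_const hu 0).ge.trans (mean_mono hu h)

lemma abs_mean_le (hu : u ∈ Δf A) (h : ∀ a, |f a| ≤ b) : |mean u f| ≤ b :=
  abs_le.2 ⟨(mean_const hu _).ge.trans (mean_mono hu fun a => (abs_le.1 (h a)).1),
    (mean_mono hu fun a => (abs_le.1 (h a)).2).trans (mean_const hu _).le⟩

lemma convex_Δf (A : Type*) : Convex ℝ (Δf A) := by
  intro u hu v hv a b ha hb hab
  refine ⟨fun i => add_nonneg (mul_nonneg ha (hu.1 i)) (mul_nonneg hb (hv.1 i)), ?_⟩
  rw [Finsupp.sum_add_index' (fun _ => rfl) (fun _ _ _ => rfl),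
    Finsupp.sum_smul_index (fun _ => rfl), Finsupp.sum_smul_index (fun _ => rfl),
    ← Finsupp.mul_sum, ← Finsupp.mul_sum, hu.2, hv.2, mul_one, mul_one, hab]

/-- The probability that an action came from the first of two sources used with probabilities `l`
and `1 - l`, when they produce it with probabilities `b` and `c` (`0` if it is never produced). -/
noncomputable def posterior (l b c : ℝ) : ℝ := l * b / (l * b + (1 - l) * c)

lemma posterior_mem_Icc {b c : ℝ} (hl : l ∈ Icc (0 : ℝ) 1) (hb : 0 ≤ b) (hc : 0 ≤ c) :
    posterior l b c ∈ Icc (0 : ℝ) 1 := by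
  have hlb : 0 ≤ l * b := mul_nonneg hl.1 hb
  have hlc : 0 ≤ (1 - l) * c := mul_nonneg (sub_nonneg.2 hl.2) hc
  exact ⟨div_nonneg hlb (add_nonneg hlb hlc),
    div_le_one_of_le₀ (le_add_of_nonneg_right hlc) (add_nonneg hlb hlc)⟩

lemma mul_posterior {b c : ℝ} (hl : l ∈ Icc (0 : ℝ) 1) (hb : 0 ≤ b) (hc : 0 ≤ c) (y z : ℝ) :
    (l * b + (1 - l) * c) * (posterior l b c * y + (1 - posterior l b c) * z) =
      l * (b * y) + (1 - l) * (c * z) := by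
  have hlb : 0 ≤ l * b := mul_nonneg hl.1 hb
  have hlc : 0 ≤ (1 - l) * c := mul_nonneg (sub_nonneg.2 hl.2) hc
  have hmul : (l * b + (1 - l) * c) * posterior l b c = l * b :=
    mul_div_cancel_of_imp' fun h => ((add_eq_zero_iff_of_nonneg hlb hlc).1 h).1
  linear_combination (y - z) * hmul

lemma mean_mix (hl : l ∈ Icc (0 : ℝ) 1) (hu : u ∈ Δf A) (hv : v ∈ Δf A) (f f' : A → ℝ) :
    (mean (l • u + (1 - l) • v) fun a =>
        posterior l (u a) (v a) * f a + (1 - posterior l (u a) (v a)) * f' a) =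
      l * mean u f + (1 - l) * mean v f' := by
  classical
  have hsupp : (l • u + (1 - l) • v).support ⊆ u.support ∪ v.support :=
    Finsupp.support_add.trans
      (Finset.union_subset_union Finsupp.support_smul Finsupp.support_smul)
  rw [mean_eq_sum_of_support_subset hsupp,
    mean_eq_sum_of_support_subset Finset.subset_union_left f,
    mean_eq_sum_of_support_subset Finset.subset_union_right f',
    Finset.mul_sum, Finset.mul_sum, ← Finset.sum_add_distrib]
  exact Finset.sum_congr rfl fun a _ => mul_posterior hl (hu.1 a) (hv.1 a) _ _

end Mean

/-- Functions giving the weights of the next action in terms of the past actions and signals.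
They are behavioral strategies when they satisfy `IsStrat`. -/
abbrev Strategy (A S : Type*) := List (A × S) → (A →₀ ℝ)

section Dynamics

open Matrix

variable {K A S : Type*} [Fintype K] {q : K → A → (S × K →₀ ℝ)} {g : K → A → ℝ}

open Classical in
/-- The finite set of signals which may follow the action `a`. -/
noncomputable def signals (q : K → A → (S × K →₀ ℝ)) (a : A) : Finset S :=
  Finset.univ.biUnion fun k => (q k a).support.image Prod.fst

/-- The unnormalized posterior of the new state, when the action `a` is played and the signal `s` is
received under the belief `x`; its mass is the probability of `s` given `a`. -/
noncomputable def nextBelief (q : K → A → (S × K →₀ ℝ)) (x : K → ℝ) (a : A) (s : S) : K → ℝ :=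
  x ᵥ* Matrix.of fun k k' => q k a (s, k')

/-- The continuation of the strategy `σ` after the action `a` and the signal `s`. -/
def after (σ : Strategy A S) (a : A) (s : S) : Strategy A S := fun h => σ ((a, s) :: h)

lemma mean_transition (q : K → A → (S × K →₀ ℝ)) (k : K) (a : A) (φ : S × K → ℝ) :
    mean (q k a) φ = ∑ s ∈ signals q a, ∑ k', q k a (s, k') * φ (s, k') := by
  classical
  rw [← Finset.sum_product (f := fun sk => q k a sk * φ sk)]
  refine mean_eq_sum_of_support_subset (fun sk hsk => ?_) φ
  refine Finset.mem_product.2 ⟨?_, Finset.mem_univ _⟩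
  exact Finset.mem_biUnion.2 ⟨k, Finset.mem_univ k, Finset.mem_image_of_mem _ hsk⟩

lemma dotProduct_mean_transition (q : K → A → (S × K →₀ ℝ)) (x : K → ℝ) (a : A) (φ : S × K → ℝ) :
    (x ⬝ᵥ fun k => mean (q k a) φ) =
      ∑ s ∈ signals q a, nextBelief q x a s ⬝ᵥ fun k' => φ (s, k') := by
  simp only [mean_transition, nextBelief, ← dotProduct_mulVec]
  simp only [dotProduct, mulVec, Finset.mul_sum]
  exact Finset.sum_comm

lemma mean_hist_zero (q : K → A → (S × K →₀ ℝ)) (σ : Strategy A S) (x : K → ℝ)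
    (φ : List (A × S) × K → ℝ) : mean (hist q σ x 0) φ = x ⬝ᵥ fun k => φ ([], k) := by
  simp only [mean, hist, map_sum, Finsupp.linearCombination_single, smul_eq_mul, dotProduct]

lemma mean_hist_succ (q : K → A → (S × K →₀ ℝ)) (σ : Strategy A S) (x : K → ℝ) (t : ℕ)
    (φ : List (A × S) × K → ℝ) :
    mean (hist q σ x (t + 1)) φ = mean (hist q σ x t) fun hk =>
      mean (σ hk.1) fun a => mean (q hk.2 a) fun sk => φ (hk.1 ++ [(a, sk.1)], sk.2) := by
  simp only [mean, hist, map_finsuppSum, Finsupp.linearCombination_single]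
  simp only [Finsupp.linearCombination_apply, Finsupp.sum, Finset.mul_sum, smul_eq_mul, mul_assoc]

lemma dotProduct_mean_comm (x : K → ℝ) (u : A →₀ ℝ) (f : K → A → ℝ) :
    (x ⬝ᵥ fun k => mean u (f k)) = mean u fun a => x ⬝ᵥ fun k => f k a := by
  simp only [dotProduct, mean_eq_sum, Finset.mul_sum, mul_left_comm]
  exact Finset.sum_comm

lemma mean_hist_cons (q : K → A → (S × K →₀ ℝ)) (σ : Strategy A S) (x : K → ℝ) (t : ℕ)
    (φ : List (A × S) × K → ℝ) :
    mean (hist q σ x (t + 1)) φ = mean (σ []) fun a => ∑ s ∈ signals q a,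
      mean (hist q (after σ a s) (nextBelief q x a s) t) fun hk => φ ((a, s) :: hk.1, hk.2) := by
  induction t generalizing φ with
  | zero =>
    simp only [mean_hist_succ, mean_hist_zero, dotProduct_mean_comm, dotProduct_mean_transition,
      List.nil_append]
  | succ t ih =>
    rw [mean_hist_succ, ih]
    simp only [mean_hist_succ q _ _ t]
    rfl

lemma stagePay_eq_mean_hist (q : K → A → (S × K →₀ ℝ)) (g : K → A → ℝ) (σ : Strategy A S)
    (x : K → ℝ) (t : ℕ) :
    stagePay q g σ x t = mean (hist q σ x t) fun hk => mean (σ hk.1) (g hk.2) := by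
  simp only [stagePay, mean_eq_sum, Finsupp.sum, Finset.mul_sum, mul_assoc]

lemma stagePay_zero (q : K → A → (S × K →₀ ℝ)) (g : K → A → ℝ) (σ : Strategy A S) (x : K → ℝ) :
    stagePay q g σ x 0 = mean (σ []) fun a => x ⬝ᵥ fun k => g k a := by
  rw [stagePay_eq_mean_hist, mean_hist_zero]
  exact dotProduct_mean_comm x (σ []) g

lemma stagePay_succ (q : K → A → (S × K →₀ ℝ)) (g : K → A → ℝ) (σ : Strategy A S) (x : K → ℝ)
    (t : ℕ) :
    stagePay q g σ x (t + 1) = mean (σ []) fun a => ∑ s ∈ signals q a,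
      stagePay q g (after σ a s) (nextBelief q x a s) t := by
  simp only [stagePay_eq_mean_hist, mean_hist_cons]
  rfl

lemma stagePay_sub (q : K → A → (S × K →₀ ℝ)) (g : K → A → ℝ) (σ : Strategy A S) (x y : K → ℝ)
    (t : ℕ) : stagePay q g σ (x - y) t = stagePay q g σ x t - stagePay q g σ y t := by
  induction t generalizing σ x y with
  | zero => simp only [stagePay_zero, sub_dotProduct, mean_sub]
  | succ t ih =>
    simp only [stagePay_succ, nextBelief, sub_vecMul, ih, Finset.sum_sub_distrib, mean_sub]

lemma stagePay_smul (q : K → A → (S × K →₀ ℝ)) (g : K → A → ℝ) (σ : Strategy A S) (r : ℝ)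
    (x : K → ℝ) (t : ℕ) : stagePay q g σ (r • x) t = r * stagePay q g σ x t := by
  induction t generalizing σ x with
  | zero => simp only [stagePay_zero, smul_dotProduct, smul_eq_mul, mean_mul_left]
  | succ t ih =>
    simp only [stagePay_succ, nextBelief, smul_vecMul, ih, ← Finset.mul_sum, mean_mul_left]

lemma IsStrat.after {σ : Strategy A S} (hσ : IsStrat σ) (a : A) (s : S) : IsStrat (after σ a s) :=
  fun _ => hσ _

lemma nextBelief_nonneg (hq : ∀ k a, q k a ∈ Δf (S × K)) {x : K → ℝ} (hx : 0 ≤ x) (a : A) (s : S) :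
    0 ≤ nextBelief q x a s :=
  fun _ => Finset.sum_nonneg fun k _ => mul_nonneg (hx k) ((hq k a).1 _)

lemma sum_nextBelief (hq : ∀ k a, q k a ∈ Δf (S × K)) (x : K → ℝ) (a : A) :
    ∑ s ∈ signals q a, ∑ k, nextBelief q x a s k = ∑ k, x k := by
  have h := dotProduct_mean_transition q x a fun _ => 1
  simp only [mean_const (hq _ _), dotProduct, mul_one] at h
  exact h.symm

lemma abs_nextBelief_le (hq : ∀ k a, q k a ∈ Δf (S × K)) (x : K → ℝ) (a : A) (s : S) (k' : K) :
    |nextBelief q x a s k'| ≤ nextBelief q |x| a s k' := by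
  refine (Finset.abs_sum_le_sum_abs _ _).trans_eq (Finset.sum_congr rfl fun k _ => ?_)
  rw [abs_mul]
  exact congrArg (|x k| * ·) (abs_of_nonneg ((hq k a).1 (s, k')))

lemma sum_abs_nextBelief_le (hq : ∀ k a, q k a ∈ Δf (S × K)) (x : K → ℝ) (a : A) :
    ∑ s ∈ signals q a, ∑ k, |nextBelief q x a s k| ≤ ∑ k, |x k| :=
  (Finset.sum_le_sum fun s _ => Finset.sum_le_sum fun k _ => abs_nextBelief_le hq x a s k).trans_eq
    (sum_nextBelief hq |x| a)

lemma abs_stagePay_le (hq : ∀ k a, q k a ∈ Δf (S × K)) (hg : ∀ k a, g k a ∈ Icc (0 : ℝ) 1)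
    {σ : Strategy A S} (hσ : IsStrat σ) (x : K → ℝ) (t : ℕ) :
    |stagePay q g σ x t| ≤ ∑ k, |x k| := by
  induction t generalizing σ x with
  | zero =>
    rw [stagePay_zero]
    refine abs_mean_le (hσ _) fun a => (Finset.abs_sum_le_sum_abs _ _).trans ?_
    refine Finset.sum_le_sum fun k _ => ?_
    rw [abs_mul, abs_of_nonneg (hg k a).1]
    exact mul_le_of_le_one_right (abs_nonneg _) (hg k a).2
  | succ t ih =>
    rw [stagePay_succ]
    refine abs_mean_le (hσ _) fun a => (Finset.abs_sum_le_sum_abs _ _).trans ?_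
    exact (Finset.sum_le_sum fun s _ => ih (hσ.after a s) _).trans (sum_abs_nextBelief_le hq x a)

lemma stagePay_nonneg (hq : ∀ k a, q k a ∈ Δf (S × K)) (hg : ∀ k a, 0 ≤ g k a)
    {σ : Strategy A S} (hσ : IsStrat σ) {x : K → ℝ} (hx : 0 ≤ x) (t : ℕ) :
    0 ≤ stagePay q g σ x t := by
  induction t generalizing σ x with
  | zero =>
    rw [stagePay_zero]
    exact mean_nonneg (hσ _) fun a => Finset.sum_nonneg fun k _ => mul_nonneg (hx k) (hg k a)
  | succ t ih =>
    rw [stagePay_succ]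
    exact mean_nonneg (hσ _) fun a => Finset.sum_nonneg fun s _ =>
      ih (hσ.after a s) (nextBelief_nonneg hq hx a s)

lemma abs_stagePay_le_one (hq : ∀ k a, q k a ∈ Δf (S × K)) (hg : ∀ k a, g k a ∈ Icc (0 : ℝ) 1)
    {σ : Strategy A S} (hσ : IsStrat σ) {p : K → ℝ} (hp : p ∈ ΔK K) (t : ℕ) :
    |stagePay q g σ p t| ≤ 1 :=
  (abs_stagePay_le hq hg hσ p t).trans_eq <| by simp only [abs_of_nonneg (hp.1 _), hp.2]

end Dynamics

section Strategies

variable {K A S : Type*} [Fintype K]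

lemma exists_isStrat (A S : Type*) [Nonempty A] : ∃ σ : Strategy A S, IsStrat σ := by
  classical
  refine ⟨fun _ => Finsupp.single (Classical.arbitrary A) 1, fun _ => ⟨fun a => ?_, ?_⟩⟩
  · exact Finsupp.single_nonneg.2 zero_le_one a
  · exact Finsupp.sum_single_index rfl

/-- `σ` and `τ` prescribe the same play at the first `t` stages. -/
abbrev Agree (t : ℕ) (σ τ : Strategy A S) : Prop := EqOn σ τ {h | h.length < t}

lemma agree_zero (σ τ : Strategy A S) : Agree 0 σ τ := fun _ h => (Nat.not_lt_zero _ h).elim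

lemma Agree.mono {t t' : ℕ} {σ τ : Strategy A S} (h : Agree t' σ τ) (htt' : t ≤ t') : Agree t σ τ :=
  EqOn.mono (fun _ hh => lt_of_lt_of_le hh htt') h

lemma Agree.after {t : ℕ} {σ τ : Strategy A S} (h : Agree (t + 1) σ τ) (a : A) (s : S) :
    Agree t (after σ a s) (after τ a s) :=
  fun _ hl => h (Nat.succ_lt_succ hl)

lemma Agree.stagePay_eq {T : ℕ} {σ τ : Strategy A S} (h : Agree T σ τ) {t : ℕ} (ht : t < T)
    (q : K → A → (S × K →₀ ℝ)) (g : K → A → ℝ) (x : K → ℝ) :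
    stagePay q g σ x t = stagePay q g τ x t := by
  replace h : Agree (t + 1) σ τ := h.mono ht
  clear ht
  induction t generalizing σ τ x with
  | zero => rw [stagePay_zero, stagePay_zero, h Nat.one_pos]
  | succ t ih =>
    rw [stagePay_succ, stagePay_succ, h (Nat.succ_pos _)]
    simp only [ih _ (h.after _ _)]

/-- The strategy which plays `u` first, and then follows `T a s` after the action `a` and the signal
`s`. -/
def glue (u : A →₀ ℝ) (T : A → S → Strategy A S) : Strategy A S
  | [] => u
  | (a, s) :: h => T a s h

lemma IsStrat.glue {u : A →₀ ℝ} (hu : u ∈ Δf A) {T : A → S → Strategy A S}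
    (hT : ∀ a s, IsStrat (T a s)) : IsStrat (glue u T)
  | [] => hu
  | (a, s) :: h => hT a s h

lemma Agree.glue {t : ℕ} {σ : Strategy A S} {T : A → S → Strategy A S}
    (hT : ∀ a s, Agree t (T a s) (Stmt18.after σ a s)) : Agree (t + 1) (glue (σ []) T) σ
  | [], _ => rfl
  | (a, s) :: _, hl => hT a s (Nat.lt_of_succ_lt_succ hl)

/-- The behavioral strategy equivalent, in the sense of Kuhn, to following `σ` with probability `l`
and `τ` with probability `1 - l`: the odds are updated after each action. -/
noncomputable def mix : ℝ → Strategy A S → Strategy A S → Strategy A S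
  | l, σ, τ, [] => l • σ [] + (1 - l) • τ []
  | l, σ, τ, (a, s) :: h => mix (posterior l (σ [] a) (τ [] a)) (after σ a s) (after τ a s) h

lemma after_mix (l : ℝ) (σ τ : Strategy A S) (a : A) (s : S) :
    after (mix l σ τ) a s = mix (posterior l (σ [] a) (τ [] a)) (after σ a s) (after τ a s) := by
  funext h
  rw [after, mix]

lemma IsStrat.mix {l : ℝ} (hl : l ∈ Icc (0 : ℝ) 1) {σ τ : Strategy A S} (hσ : IsStrat σ)
    (hτ : IsStrat τ) : IsStrat (mix l σ τ) := by
  intro h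
  induction h generalizing l σ τ with
  | nil =>
    rw [Stmt18.mix]
    exact convex_Δf A (hσ _) (hτ _) hl.1 (sub_nonneg.2 hl.2) (add_sub_cancel _ _)
  | cons b h ih =>
    rw [Stmt18.mix]
    exact ih (posterior_mem_Icc hl ((hσ _).1 _) ((hτ _).1 _)) (hσ.after b.1 b.2) (hτ.after b.1 b.2)

lemma Agree.mix (l : ℝ) {t : ℕ} {σ τ ρ : Strategy A S} (hσ : Agree t σ ρ) (hτ : Agree t τ ρ) :
    Agree t (mix l σ τ) ρ := by
  intro h hh
  induction h generalizing l t σ τ ρ with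
  | nil => rw [Stmt18.mix, hσ hh, hτ hh, ← add_smul, add_sub_cancel, one_smul]
  | cons b h ih =>
    obtain ⟨t, rfl⟩ := Nat.exists_eq_add_one_of_ne_zero (Nat.ne_zero_of_lt hh)
    rw [Stmt18.mix]
    exact ih _ (hσ.after b.1 b.2) (hτ.after b.1 b.2) (Nat.lt_of_succ_lt_succ hh)

lemma stagePay_mix {l : ℝ} (hl : l ∈ Icc (0 : ℝ) 1) {σ τ : Strategy A S} (hσ : IsStrat σ)
    (hτ : IsStrat τ) (q : K → A → (S × K →₀ ℝ)) (g : K → A → ℝ) (x : K → ℝ) (t : ℕ) :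
    stagePay q g (mix l σ τ) x t = l * stagePay q g σ x t + (1 - l) * stagePay q g τ x t := by
  induction t generalizing l σ τ x with
  | zero =>
    simp only [stagePay_zero, ← mean_mix hl (hσ []) (hτ []), ← add_mul, add_sub_cancel, one_mul]
    rw [mix]
  | succ t ih =>
    have hpost (a : A) : posterior l (σ [] a) (τ [] a) ∈ Icc (0 : ℝ) 1 :=
      posterior_mem_Icc hl ((hσ []).1 a) ((hτ []).1 a)
    simp only [stagePay_succ, after_mix, ih (hpost _) (hσ.after _ _) (hτ.after _ _),
      Finset.sum_add_distrib, ← Finset.mul_sum, ← mean_mix hl (hσ []) (hτ [])]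
    rw [mix]

lemma exists_isStrat_agree_of_chain {N : ℕ} (hN : 0 < N) {s : ℕ → Strategy A S}
    (hs : ∀ i, IsStrat (s i)) (hagree : ∀ i, Agree (i * N) (s (i + 1)) (s i)) :
    ∃ σ : Strategy A S, IsStrat σ ∧ ∀ i, Agree (i * N) σ (s i) := by
  have hchain {i j : ℕ} (hij : i ≤ j) : Agree (i * N) (s j) (s i) := by
    induction j, hij using Nat.le_induction with
    | base => exact eqOn_refl _ _
    | succ j hij ih => exact ((hagree j).mono (Nat.mul_le_mul_right N hij)).trans ih
  refine ⟨fun h => s (h.length + 1) h, fun h => hs _ _, fun i h hi => ?_⟩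
  have hlen : h.length < (h.length + 1) * N := Nat.lt_of_succ_le (Nat.le_mul_of_pos_right _ hN)
  rcases le_total i (h.length + 1) with hle | hle
  · exact hchain hle hi
  · exact (hchain hle hlen).symm

end Strategies

section Evaluations

variable {θ θ' c d : ℕ → ℝ} {M M' α : ℝ}

/-- The `θ`-weighted sum of a sequence of stage payoffs; `payoff q g θ σ p` is by definition
`weightedSum θ (stagePay q g σ p)`. -/
noncomputable def weightedSum (θ c : ℕ → ℝ) : ℝ := ∑' t, θ t * c t

lemma IsEval.summable (hθ : IsEval θ) : Summable θ :=
  not_imp_comm.1 tsum_eq_zero_of_not_summable (hθ.2.trans_ne one_ne_zero)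

lemma IsEval.hasSum (hθ : IsEval θ) : HasSum θ 1 := hθ.2 ▸ hθ.summable.hasSum

lemma IsEval.summable_mul (hθ : IsEval θ) (hc : ∀ t, |c t| ≤ M) : Summable fun t => θ t * c t := by
  refine .of_norm_bounded (hθ.summable.mul_right M) fun t => ?_
  rw [norm_mul, Real.norm_of_nonneg (hθ.1 t)]
  exact mul_le_mul_of_nonneg_left (hc t) (hθ.1 t)

lemma weightedSum_const (hθ : IsEval θ) (b : ℝ) : (weightedSum θ fun _ => b) = b := by
  rw [weightedSum, tsum_mul_right, hθ.2, one_mul]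

lemma weightedSum_nonneg (hθ : IsEval θ) (hc : ∀ t, 0 ≤ c t) : 0 ≤ weightedSum θ c :=
  tsum_nonneg fun t => mul_nonneg (hθ.1 t) (hc t)

lemma weightedSum_add (hθ : IsEval θ) (hc : ∀ t, |c t| ≤ M) (hd : ∀ t, |d t| ≤ M') :
    (weightedSum θ fun t => c t + d t) = weightedSum θ c + weightedSum θ d := by
  simp only [weightedSum, mul_add]
  exact (hθ.summable_mul hc).tsum_add (hθ.summable_mul hd)

lemma weightedSum_sub (hθ : IsEval θ) (hc : ∀ t, |c t| ≤ M) (hd : ∀ t, |d t| ≤ M') :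
    (weightedSum θ fun t => c t - d t) = weightedSum θ c - weightedSum θ d := by
  simp only [weightedSum, mul_sub]
  exact (hθ.summable_mul hc).tsum_sub (hθ.summable_mul hd)

lemma weightedSum_mono (hθ : IsEval θ) (hc : ∀ t, |c t| ≤ M) (hd : ∀ t, |d t| ≤ M')
    (hcd : ∀ t, c t ≤ d t) : weightedSum θ c ≤ weightedSum θ d :=
  (hθ.summable_mul hc).tsum_le_tsum (fun t => mul_le_mul_of_nonneg_left (hcd t) (hθ.1 t))
    (hθ.summable_mul hd)

lemma abs_weightedSum_le_weightedSum (hθ : IsEval θ) (hd : ∀ t, |d t| ≤ M)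
    (hcd : ∀ t, |c t| ≤ d t) : |weightedSum θ c| ≤ weightedSum θ d := by
  refine tsum_of_norm_bounded (E := ℝ) (hθ.summable_mul hd).hasSum fun t => ?_
  rw [norm_mul, Real.norm_of_nonneg (hθ.1 t)]
  exact mul_le_mul_of_nonneg_left (hcd t) (hθ.1 t)

lemma abs_weightedSum_le (hθ : IsEval θ) (hc : ∀ t, |c t| ≤ M) : |weightedSum θ c| ≤ M :=
  (abs_weightedSum_le_weightedSum hθ (fun _ => le_refl |M|) hc).trans_eq (weightedSum_const hθ M)

lemma weightedSum_mul_left (θ : ℕ → ℝ) (r : ℝ) (c : ℕ → ℝ) :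
    (weightedSum θ fun t => r * c t) = r * weightedSum θ c := by
  simp only [weightedSum, mul_left_comm _ r, tsum_mul_left]

lemma weightedSum_finsetSum {ι : Type*} (hθ : IsEval θ) (s : Finset ι) {f : ι → ℕ → ℝ} {M : ι → ℝ}
    (hf : ∀ i t, |f i t| ≤ M i) :
    (weightedSum θ fun t => ∑ i ∈ s, f i t) = ∑ i ∈ s, weightedSum θ (f i) := by
  simp only [weightedSum, Finset.mul_sum]
  exact Summable.tsum_finsetSum fun i _ => hθ.summable_mul (hf i)

lemma weightedSum_mean {A : Type*} (hθ : IsEval θ) (u : A →₀ ℝ) {f : A → ℕ → ℝ} {M : A → ℝ}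
    (hf : ∀ a t, |f a t| ≤ M a) :
    (weightedSum θ fun t => mean u fun a => f a t) = mean u fun a => weightedSum θ (f a) := by
  simp only [mean_eq_sum, ← weightedSum_mul_left]
  refine weightedSum_finsetSum hθ u.support (M := fun a => |u a| * M a) fun a t => ?_
  rw [abs_mul]
  exact mul_le_mul_of_nonneg_left (hf a t) (abs_nonneg _)

lemma weightedSum_sum_smul {ι : Type*} (s : Finset ι) (w : ι → ℝ) {ϑ : ι → ℕ → ℝ}
    (hϑ : ∀ i, IsEval (ϑ i)) (hc : ∀ t, |c t| ≤ M) :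
    weightedSum (∑ i ∈ s, w i • ϑ i) c = ∑ i ∈ s, w i * weightedSum (ϑ i) c := by
  simp only [weightedSum, ← tsum_mul_left]
  rw [← Summable.tsum_finsetSum fun i _ => ((hϑ i).summable_mul hc).mul_left _]
  simp only [Finset.sum_apply, Pi.smul_apply, smul_eq_mul, Finset.sum_mul, mul_assoc]

lemma weightedSum_comm (hθ : IsEval θ) (hθ' : IsEval θ') {f : ℕ → ℕ → ℝ}
    (hf : ∀ s t, |f s t| ≤ M) :
    (weightedSum θ fun s => weightedSum θ' (f s)) =
      weightedSum θ' fun t => weightedSum θ fun s => f s t := by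
  have hsum : Summable (Function.uncurry fun s t => θ s * (θ' t * f s t)) := by
    refine .of_norm_bounded ((hθ.summable.mul_of_nonneg hθ'.summable hθ.1 hθ'.1).mul_right M) ?_
    rintro ⟨s, t⟩
    rw [Function.uncurry_apply_pair, ← mul_assoc, norm_mul,
      Real.norm_of_nonneg (mul_nonneg (hθ.1 s) (hθ'.1 t))]
    exact mul_le_mul_of_nonneg_left (hf s t) (mul_nonneg (hθ.1 s) (hθ'.1 t))
  simp only [weightedSum, ← tsum_mul_left]
  exact hsum.tsum_comm.symm.trans (tsum_congr fun t => tsum_congr fun s => mul_left_comm _ _ _)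

/-- The evaluation `θ` delayed by one stage. -/
def delay (θ : ℕ → ℝ) : ℕ → ℝ
  | 0 => 0
  | t + 1 => θ t

lemma IsEval.delay (hθ : IsEval θ) : IsEval (delay θ) := by
  refine ⟨fun t => by cases t; exacts [le_rfl, hθ.1 _], HasSum.tsum_eq ?_⟩
  rw [← hasSum_nat_add_iff' 1, Finset.sum_range_one]
  exact (sub_zero (1 : ℝ)).symm ▸ hθ.hasSum

lemma weightedSum_delay (hθ : IsEval θ) (hc : ∀ t, |c t| ≤ M) :
    weightedSum (delay θ) c = weightedSum θ fun t => c (t + 1) := by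
  rw [weightedSum, (hθ.delay.summable_mul hc).tsum_eq_zero_add]
  simp only [delay, zero_mul, zero_add, weightedSum]

lemma weightedSum_iterate_delay (hθ : IsEval θ) (hc : ∀ t, |c t| ≤ M) (n : ℕ) :
    weightedSum (delay^[n] θ) c = weightedSum θ fun t => c (n + t) := by
  induction n generalizing θ with
  | zero => simp only [Function.iterate_zero_apply, zero_add]
  | succ n ih =>
    rw [Function.iterate_succ_apply, ih hθ.delay, weightedSum_delay hθ fun t => hc _]
    simp only [add_assoc, add_comm 1]

/-- The total variation of `θ` extended by `0` before the first stage: the impatience plus the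
initial weight. Unlike the impatience, it is invariant under delay. -/
noncomputable def variation (θ : ℕ → ℝ) : ℝ := ∑' t, |θ t - delay θ t|

lemma IsEval.summable_variation (hθ : IsEval θ) : Summable fun t => |θ t - Stmt18.delay θ t| :=
  (hθ.summable.sub hθ.delay.summable).abs

lemma variation_nonneg (θ : ℕ → ℝ) : 0 ≤ variation θ := tsum_nonneg fun _ => abs_nonneg _

lemma variation_eq (hθ : IsEval θ) : variation θ = θ 0 + impatience θ := by
  rw [variation, hθ.summable_variation.tsum_eq_zero_add]
  simp only [delay, sub_zero, abs_of_nonneg (hθ.1 0), impatience]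

lemma apply_zero_le_impatience (hθ : IsEval θ) : θ 0 ≤ impatience θ := by
  have hsucc : Summable fun t => θ (t + 1) := (summable_nat_add_iff 1).2 hθ.summable
  have htele : ∑' t, (θ (t + 1) - θ t) = -θ 0 := by
    rw [hsucc.tsum_sub hθ.summable, hθ.summable.tsum_eq_zero_add]
    ring
  calc θ 0 ≤ |∑' t, (θ (t + 1) - θ t)| := by rw [htele, abs_neg]; exact le_abs_self _
    _ ≤ impatience θ := norm_tsum_le_tsum_norm (hsucc.sub hθ.summable).norm

lemma variation_le_two_mul_impatience (hθ : IsEval θ) : variation θ ≤ 2 * impatience θ := by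
  linarith [variation_eq hθ, apply_zero_le_impatience hθ]

lemma variation_delay (hθ : IsEval θ) : variation (delay θ) = variation θ := by
  rw [variation, hθ.delay.summable_variation.tsum_eq_zero_add]
  simp only [delay, sub_self, abs_zero, zero_add, variation]

lemma abs_weightedSum_delay_sub_le (hθ : IsEval θ) (hc : ∀ t, |c t| ≤ M) :
    |weightedSum (delay θ) c - weightedSum θ c| ≤ M * variation θ := by
  rw [abs_sub_comm, weightedSum, weightedSum,
    ← (hθ.summable_mul hc).tsum_sub (hθ.delay.summable_mul hc), variation, ← tsum_mul_left]
  refine tsum_of_norm_bounded (E := ℝ) (hθ.summable_variation.mul_left M).hasSum fun t => ?_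
  rw [← sub_mul, norm_mul, mul_comm]
  exact mul_le_mul_of_nonneg_right (hc t) (abs_nonneg _)

lemma abs_weightedSum_shift_sub_le (hθ : IsEval θ) (hc : ∀ t, |c t| ≤ M) (n : ℕ) :
    |weightedSum θ (fun t => c (n + t)) - weightedSum θ c| ≤ n * (M * variation θ) := by
  rw [← weightedSum_iterate_delay hθ hc n]
  induction n generalizing θ with
  | zero =>
    simp only [Function.iterate_zero_apply, sub_self, abs_zero, Nat.cast_zero, zero_mul, le_rfl]
  | succ n ih =>
    have hn := ih hθ.delay
    rw [variation_delay hθ, ← Function.iterate_succ_apply] at hn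
    calc _ ≤ n * (M * variation θ) + M * variation θ :=
          (abs_sub_le _ _ _).trans (add_le_add hn (abs_weightedSum_delay_sub_le hθ hc))
      _ = _ := by push_cast; ring

/-- The evaluations of variation at most `α`, which stand for those of small impatience. -/
def patient (α : ℝ) : Set (ℕ → ℝ) := {θ | IsEval θ ∧ variation θ ≤ α}

lemma iterate_delay_mem_patient (hθ : θ ∈ patient α) (n : ℕ) : delay^[n] θ ∈ patient α :=
  Function.Iterate.rec (· ∈ patient α) hθ
    (fun _ h => ⟨h.1.delay, (variation_delay h.1).trans_le h.2⟩) n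

lemma delay_add_smul (a b : ℝ) (θ θ' : ℕ → ℝ) (t : ℕ) :
    delay (a • θ + b • θ') t = a * delay θ t + b * delay θ' t := by
  cases t
  · simp only [delay, mul_zero, add_zero]
  · rfl

lemma convex_patient (α : ℝ) : Convex ℝ (patient α) := by
  intro θ hθ θ' hθ' a b ha hb hab
  have hsum : HasSum (a • θ + b • θ') 1 := by
    have h := (hθ.1.hasSum.mul_left a).add (hθ'.1.hasSum.mul_left b)
    rwa [mul_one, mul_one, hab] at h
  have heval : IsEval (a • θ + b • θ') :=
    ⟨fun t => add_nonneg (mul_nonneg ha (hθ.1.1 t)) (mul_nonneg hb (hθ'.1.1 t)), hsum.tsum_eq⟩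
  refine ⟨heval, ?_⟩
  have hs := hθ.1.summable_variation.mul_left a
  have hs' := hθ'.1.summable_variation.mul_left b
  calc variation (a • θ + b • θ')
      ≤ ∑' t, (a * |θ t - delay θ t| + b * |θ' t - delay θ' t|) := by
        refine heval.summable_variation.tsum_le_tsum (fun t => ?_) (hs.add hs')
        have hsplit : (a • θ + b • θ') t - delay (a • θ + b • θ') t =
            a * (θ t - delay θ t) + b * (θ' t - delay θ' t) := by
          rw [delay_add_smul, Pi.add_apply, Pi.smul_apply, Pi.smul_apply, smul_eq_mul, smul_eq_mul]
          ring
        rw [hsplit]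
        refine (abs_add_le _ _).trans_eq ?_
        rw [abs_mul, abs_mul, abs_of_nonneg ha, abs_of_nonneg hb]
    _ = a * variation θ + b * variation θ' := by
        rw [hs.tsum_add hs', tsum_mul_left, tsum_mul_left, variation, variation]
    _ ≤ a * α + b * α := add_le_add (mul_le_mul_of_nonneg_left hθ.2 ha)
        (mul_le_mul_of_nonneg_left hθ'.2 hb)
    _ = α := by rw [← add_mul, hab, one_mul]

/-- The evaluation of the mean payoff over the first `N` stages. -/
noncomputable def uniform (N : ℕ) : ℕ → ℝ := indicator (Iio N) fun _ => (N : ℝ)⁻¹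

lemma weightedSum_uniform (N : ℕ) (c : ℕ → ℝ) :
    weightedSum (uniform N) c = (N : ℝ)⁻¹ * ∑ t ∈ Finset.range N, c t := by
  rw [weightedSum, tsum_eq_sum (s := Finset.range N), Finset.mul_sum]
  · refine Finset.sum_congr rfl fun t ht => ?_
    rw [uniform, indicator_of_mem (mem_Iio.2 (Finset.mem_range.1 ht))]
  · intro t ht
    rw [uniform, indicator_of_notMem fun h => ht (Finset.mem_range.2 (mem_Iio.1 h)), zero_mul]

lemma isEval_uniform {N : ℕ} (hN : 0 < N) : IsEval (uniform N) := by
  refine ⟨fun t => indicator_nonneg (fun _ _ => inv_nonneg.2 N.cast_nonneg) t, ?_⟩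
  have h := weightedSum_uniform N fun _ => 1
  simp only [weightedSum, mul_one, Finset.sum_const, Finset.card_range, nsmul_eq_mul] at h
  rw [h, inv_mul_cancel₀ (Nat.cast_ne_zero.2 hN.ne')]

lemma variation_uniform {N : ℕ} (hN : 0 < N) : variation (uniform N) = 2 / N := by
  have hjump : ∑' t, |uniform N (t + 1) - uniform N t| = (N : ℝ)⁻¹ := by
    rw [tsum_eq_single (N - 1)]
    · simp [uniform, indicator, Nat.sub_add_cancel hN, hN]
    · intro t ht
      have hiff : t + 1 < N ↔ t < N := by omega
      simp [uniform, indicator, hiff]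
  rw [variation_eq (isEval_uniform hN), impatience, hjump, uniform, indicator_of_mem (mem_Iio.2 hN)]
  ring

lemma exists_uniform_mem_patient (hα : 0 < α) : ∃ N : ℕ, 0 < N ∧ uniform N ∈ patient α := by
  obtain ⟨N, hN⟩ := exists_nat_gt (2 / α)
  have hpos : (0 : ℝ) < N := (div_pos two_pos hα).trans hN
  refine ⟨N, Nat.cast_pos.1 hpos, isEval_uniform (Nat.cast_pos.1 hpos), ?_⟩
  rw [variation_uniform (Nat.cast_pos.1 hpos)]
  exact ((div_lt_comm₀ hα hpos).1 hN).le

end Evaluations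

section Patience

open Filter Topology

variable {θ' c d : ℕ → ℝ} {D ε : ℝ}

/-- The type of evaluations. -/
abbrev Evaluation := {θ : ℕ → ℝ // IsEval θ}

/-- The filter on evaluations along which the impatience (equivalently, the variation) tends to
`0`. -/
noncomputable def patience : Filter Evaluation := comap (fun θ => variation θ.1) (𝓝 0)

lemma tendsto_variation : Tendsto (fun θ : Evaluation => variation θ.1) patience (𝓝 0) :=
  tendsto_comap

lemma eventually_patience {P : Evaluation → Prop} :
    (∀ᶠ θ in patience, P θ) ↔ ∃ α > 0, ∀ θ : Evaluation, variation θ.1 ≤ α → P θ := by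
  refine (Metric.nhds_basis_closedBall.comap _).eventually_iff.trans ?_
  simp only [mem_preimage, mem_closedBall_zero_iff, Real.norm_eq_abs,
    abs_of_nonneg (variation_nonneg _)]

instance patience_neBot : patience.NeBot := by
  refine ⟨fun hbot => ?_⟩
  obtain ⟨α, hα, h⟩ := eventually_patience.1 (hbot ▸ eventually_bot : ∀ᶠ _ in patience, False)
  obtain ⟨N, -, hN⟩ := exists_uniform_mem_patient hα
  exact h ⟨uniform N, hN.1⟩ hN.2

lemma tendsto_weightedSum_min_mul_variation (hθ' : IsEval θ') (hD : 0 ≤ D) :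
    Tendsto (fun θ : Evaluation => weightedSum θ' fun n => min (2 * D) (n * (D * variation θ.1)))
      patience (𝓝 0) := by
  have hlim : ∑' n, θ' n * min (2 * D) (n * (D * 0)) = 0 := by
    simp only [mul_zero, min_eq_right (mul_nonneg zero_le_two hD), tsum_zero]
  rw [← hlim]
  refine tendsto_tsum_of_dominated_convergence (hθ'.summable.mul_right (2 * D)) (fun n => ?_)
    (Eventually.of_forall fun θ n => ?_)
  · exact (tendsto_const_nhds.min ((tendsto_variation.const_mul D).const_mul _)).const_mul _
  · rw [Real.norm_of_nonneg]
    · exact mul_le_mul_of_nonneg_left (min_le_left _ _) (hθ'.1 n)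
    · have := variation_nonneg θ.1
      exact mul_nonneg (hθ'.1 n) (by positivity)

lemma abs_weightedSum_windows_sub_le {θ : ℕ → ℝ} (hθ : IsEval θ) (hθ' : IsEval θ')
    (hc : ∀ t, |c t| ≤ D) :
    |weightedSum θ (fun t => weightedSum θ' fun n => c (t + n)) - weightedSum θ c| ≤
      weightedSum θ' fun n => min (2 * D) (n * (D * variation θ)) := by
  have hshift (n : ℕ) : |weightedSum θ (fun t => c (n + t)) - weightedSum θ c| ≤
      min (2 * D) (n * (D * variation θ)) := by
    refine le_min ?_ (abs_weightedSum_shift_sub_le hθ hc n)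
    have := abs_weightedSum_le hθ fun t => hc (n + t)
    have := abs_weightedSum_le hθ hc
    linarith [abs_sub (weightedSum θ fun t => c (n + t)) (weightedSum θ c)]
  have hmin (n : ℕ) : |min (2 * D) (n * (D * variation θ))| ≤ 2 * D :=
    (abs_of_nonneg ((abs_nonneg _).trans (hshift n))).trans_le (min_le_left _ _)
  have hswap : weightedSum θ (fun t => weightedSum θ' fun n => c (t + n)) - weightedSum θ c =
      weightedSum θ' fun n => weightedSum θ (fun t => c (n + t)) - weightedSum θ c := by
    rw [weightedSum_sub hθ' (fun n => abs_weightedSum_le hθ fun t => hc (n + t)) fun _ => le_rfl,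
      weightedSum_const hθ', weightedSum_comm hθ hθ' fun t n => hc (t + n)]
    simp only [add_comm]
  rw [hswap]
  exact abs_weightedSum_le_weightedSum hθ' hmin hshift

lemma eventually_abs_weightedSum_windows_sub_le (hθ' : IsEval θ') (hD : 0 ≤ D) (hε : 0 < ε) :
    ∀ᶠ θ : Evaluation in patience, ∀ c : ℕ → ℝ, (∀ t, |c t| ≤ D) →
      |weightedSum θ.1 (fun t => weightedSum θ' fun n => c (t + n)) - weightedSum θ.1 c| ≤ ε := by
  filter_upwards [(tendsto_weightedSum_min_mul_variation hθ' hD).eventually_le_const hε]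
    with θ hθ c hc
  exact (abs_weightedSum_windows_sub_le θ.2 hθ' hc).trans hθ

lemma eventually_weightedSum_le_of_windows_le (hθ' : IsEval θ') (hD : 0 ≤ D) (hε : 0 < ε) :
    ∀ᶠ θ : Evaluation in patience, ∀ (c : ℕ → ℝ) (b : ℝ), (∀ t, |c t| ≤ D) →
      (∀ t, (weightedSum θ' fun n => c (t + n)) ≤ b) → weightedSum θ.1 c ≤ b + ε := by
  filter_upwards [eventually_abs_weightedSum_windows_sub_le hθ' hD hε] with θ hθ c b hc hb
  have hwindows : weightedSum θ.1 (fun t => weightedSum θ' fun n => c (t + n)) ≤ b :=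
    (weightedSum_mono θ.2 (fun t => abs_weightedSum_le hθ' fun n => hc (t + n))
      (fun _ => le_refl |b|) hb).trans_eq (weightedSum_const θ.2 b)
  linarith [abs_le.1 (hθ c hc)]

lemma neg_le_sum_window_of_blocks {N : ℕ} (hN : 0 < N) (hd : ∀ t, |d t| ≤ D)
    (hblock : ∀ i, 0 ≤ ∑ j ∈ Finset.range N, d (i * N + j)) (t L : ℕ) :
    -(2 * (N * D)) ≤ ∑ j ∈ Finset.range L, d (t + j) := by
  let P (n : ℕ) : ℝ := ∑ j ∈ Finset.range n, d j
  have hP (m n : ℕ) : P (m + n) - P m = ∑ j ∈ Finset.range n, d (m + j) := by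
    rw [sub_eq_iff_eq_add']
    exact Finset.sum_range_add d m n
  have hmono : Monotone fun i => P (i * N) := by
    refine monotone_nat_of_le_succ fun i => sub_nonneg.1 ?_
    rw [Nat.succ_mul, hP]
    exact hblock i
  have hround (n : ℕ) : |P n - P (n / N * N)| ≤ N * D := by
    have hsplit := hP (n / N * N) (n % N)
    rw [Nat.div_add_mod'] at hsplit
    rw [hsplit]
    calc |∑ j ∈ Finset.range (n % N), d (n / N * N + j)|
        ≤ (n % N : ℕ) * D := by
          refine (Finset.abs_sum_le_sum_abs _ _).trans
            ((Finset.sum_le_card_nsmul _ _ D fun j _ => hd _).trans_eq ?_)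
          rw [Finset.card_range, nsmul_eq_mul]
      _ ≤ N * D := mul_le_mul_of_nonneg_right (Nat.cast_le.2 (n.mod_lt hN).le)
          ((abs_nonneg _).trans (hd 0))
  have h1 := abs_le.1 (hround t)
  have h2 := abs_le.1 (hround (t + L))
  have h3 := hmono (Nat.div_le_div_right (c := N) (Nat.le_add_right t L))
  rw [← hP]
  simp only at h3
  linarith

lemma eventually_neg_le_weightedSum_of_blocks {N : ℕ} (hN : 0 < N) (hD : 0 ≤ D) (hε : 0 < ε) :
    ∀ᶠ θ : Evaluation in patience, ∀ d : ℕ → ℝ, (∀ t, |d t| ≤ D) →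
      (∀ i, 0 ≤ ∑ j ∈ Finset.range N, d (i * N + j)) → -ε ≤ weightedSum θ.1 d := by
  obtain ⟨L, hL⟩ := exists_nat_gt (2 * (N * D) / (ε / 2))
  have hL0 : (0 : ℝ) < L := lt_of_le_of_lt (by positivity) hL
  filter_upwards [eventually_weightedSum_le_of_windows_le (isEval_uniform (Nat.cast_pos.1 hL0)) hD
    (half_pos hε)] with θ hθ d hd hblock
  have hwindow (t : ℕ) : (weightedSum (uniform L) fun n => -1 * d (t + n)) ≤ ε / 2 := by
    rw [weightedSum_mul_left, weightedSum_uniform]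
    have := neg_le_sum_window_of_blocks hN hd hblock t L
    rw [div_lt_iff₀ (half_pos hε)] at hL
    rw [mul_left_comm, inv_mul_le_iff₀ hL0]
    linarith
  have hneg (t : ℕ) : |-1 * d t| ≤ D := by
    rw [neg_one_mul, abs_neg]
    exact hd t
  have h := hθ (fun t => -1 * d t) (ε / 2) hneg hwindow
  rw [weightedSum_mul_left] at h
  linarith

lemma eventually_sub_le_weightedSum_of_blocks {N : ℕ} (hN : 0 < N) {B : ℝ} (hB : 0 ≤ B)
    (hD : 0 ≤ D) (hε : 0 < ε) :
    ∀ᶠ θ : Evaluation in patience, ∀ (c : ℕ → ℝ) (b : ℝ), (∀ t, |c t| ≤ D) → |b| ≤ B →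
      (∀ i, N * b ≤ ∑ j ∈ Finset.range N, c (i * N + j)) → b - ε ≤ weightedSum θ.1 c := by
  filter_upwards [eventually_neg_le_weightedSum_of_blocks hN (add_nonneg hD hB) hε]
    with θ hθ c b hc hb hblock
  have h := hθ (fun t => c t - b) (fun t => (abs_sub _ _).trans (add_le_add (hc t) hb)) fun i => by
    rw [Finset.sum_sub_distrib, Finset.sum_const, Finset.card_range, nsmul_eq_mul, sub_nonneg]
    exact hblock i
  rw [weightedSum_sub θ.2 hc fun _ => le_rfl, weightedSum_const θ.2] at h
  linarith

end Patience

section Value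

variable {K A S : Type*} [Fintype K] {q : K → A → (S × K →₀ ℝ)} {g : K → A → ℝ}
  {θ θ' : ℕ → ℝ} {σ τ : Strategy A S} {x p : K → ℝ} {b δ δ' : ℝ}

/-- The `θ`-weighted payoff of the stages from `t` on, where `θ 0` is the weight of stage `t`. -/
noncomputable def tailPayoff (q : K → A → (S × K →₀ ℝ)) (g : K → A → ℝ) (θ : ℕ → ℝ) (t : ℕ)
    (σ : Strategy A S) (x : K → ℝ) : ℝ := weightedSum θ fun j => stagePay q g σ x (t + j)

lemma tailPayoff_zero (q : K → A → (S × K →₀ ℝ)) (g : K → A → ℝ) (θ : ℕ → ℝ) (σ : Strategy A S)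
    (x : K → ℝ) : tailPayoff q g θ 0 σ x = payoff q g θ σ x := by
  simp only [tailPayoff, zero_add]
  rfl

lemma payoff_smul (q : K → A → (S × K →₀ ℝ)) (g : K → A → ℝ) (θ : ℕ → ℝ) (σ : Strategy A S) (r : ℝ)
    (x : K → ℝ) : payoff q g θ σ (r • x) = r * payoff q g θ σ x :=
  (congrArg (weightedSum θ) (funext fun t => stagePay_smul q g σ r x t)).trans
    (weightedSum_mul_left θ r _)

instance : CompactSpace (ΔK K) := isCompact_iff_compactSpace.1 (isCompact_stdSimplex ℝ K)

variable (hq : ∀ k a, q k a ∈ Δf (S × K)) (hg : ∀ k a, g k a ∈ Icc (0 : ℝ) 1)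

include hq hg

lemma abs_payoff_le (hθ : IsEval θ) (hσ : IsStrat σ) (x : K → ℝ) :
    |payoff q g θ σ x| ≤ ∑ k, |x k| :=
  abs_weightedSum_le hθ (abs_stagePay_le hq hg hσ x)

lemma payoff_sub (hθ : IsEval θ) (hσ : IsStrat σ) (x y : K → ℝ) :
    payoff q g θ σ (x - y) = payoff q g θ σ x - payoff q g θ σ y :=
  (congrArg (weightedSum θ) (funext fun t => stagePay_sub q g σ x y t)).trans
    (weightedSum_sub hθ (abs_stagePay_le hq hg hσ x) (abs_stagePay_le hq hg hσ y))

lemma payoff_mem_Icc (hθ : IsEval θ) (hσ : IsStrat σ) (hp : p ∈ ΔK K) :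
    payoff q g θ σ p ∈ Icc (0 : ℝ) 1 :=
  ⟨weightedSum_nonneg hθ (stagePay_nonneg hq (fun k a => (hg k a).1) hσ hp.1),
    (le_abs_self _).trans (abs_weightedSum_le hθ (abs_stagePay_le_one hq hg hσ hp))⟩

lemma payoff_le_value (hθ : IsEval θ) (hσ : IsStrat σ) (x : K → ℝ) :
    payoff q g θ σ x ≤ value q g θ x := by
  refine le_csSup ⟨∑ k, |x k|, ?_⟩ ⟨σ, hσ, rfl⟩
  rintro _ ⟨τ, hτ, rfl⟩
  exact (le_abs_self _).trans (abs_payoff_le hq hg hθ hτ x)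

omit hq hg in
lemma value_le [Nonempty A] (h : ∀ σ : Strategy A S, IsStrat σ → payoff q g θ σ x ≤ b) :
    value q g θ x ≤ b := by
  obtain ⟨σ, hσ⟩ := exists_isStrat A S
  refine csSup_le ⟨_, σ, hσ, rfl⟩ ?_
  rintro _ ⟨τ, hτ, rfl⟩
  exact h τ hτ

omit hq hg in
lemma exists_lt_payoff_of_lt_value [Nonempty A] (h : b < value q g θ x) :
    ∃ σ : Strategy A S, IsStrat σ ∧ b < payoff q g θ σ x := by
  by_contra! hle
  exact h.not_ge (value_le hle)

lemma value_mem_Icc [Nonempty A] (hθ : IsEval θ) (hp : p ∈ ΔK K) :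
    value q g θ p ∈ Icc (0 : ℝ) 1 := by
  obtain ⟨σ, hσ⟩ := exists_isStrat A S
  exact ⟨(payoff_mem_Icc hq hg hθ hσ hp).1.trans (payoff_le_value hq hg hθ hσ p),
    value_le fun τ hτ => (payoff_mem_Icc hq hg hθ hτ hp).2⟩

lemma value_le_value_add [Nonempty A] (hθ : IsEval θ) (x y : K → ℝ) :
    value q g θ x ≤ value q g θ y + ∑ k, |x k - y k| := by
  refine value_le fun σ hσ => ?_
  have hsub := abs_payoff_le hq hg hθ hσ (x - y)
  simp only [payoff_sub hq hg hθ hσ, Pi.sub_apply] at hsub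
  linarith [(abs_le.1 hsub).2, payoff_le_value hq hg hθ hσ y]

lemma lipschitzWith_value [Nonempty A] (hθ : IsEval θ) :
    LipschitzWith (Fintype.card K) (value q g θ) := by
  refine LipschitzWith.of_le_add_mul _ fun x y => (value_le_value_add hq hg hθ x y).trans ?_
  gcongr
  refine (Finset.sum_le_card_nsmul _ _ (dist x y) fun k _ => ?_).trans_eq ?_
  · rw [← Real.dist_eq]
    exact dist_le_pi_dist x y k
  · rw [nsmul_eq_mul, Finset.card_univ, NNReal.coe_natCast]

lemma abs_stagePay_after_le (hσ : IsStrat σ) (x : K → ℝ) (a : A) (t : ℕ) :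
    |∑ s ∈ signals q a, stagePay q g (after σ a s) (nextBelief q x a s) t| ≤ ∑ k, |x k| :=
  (Finset.abs_sum_le_sum_abs _ _).trans <|
    (Finset.sum_le_sum fun s _ => abs_stagePay_le hq hg (hσ.after a s) _ t).trans
      (sum_abs_nextBelief_le hq x a)

lemma tailPayoff_succ (hθ : IsEval θ) (hσ : IsStrat σ) (x : K → ℝ) (t : ℕ) :
    tailPayoff q g θ (t + 1) σ x = mean (σ []) fun a => ∑ s ∈ signals q a,
      tailPayoff q g θ t (after σ a s) (nextBelief q x a s) := by
  simp only [tailPayoff, Nat.add_right_comm t 1, stagePay_succ]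
  rw [weightedSum_mean hθ (σ []) fun a j => abs_stagePay_after_le hq hg hσ x a (t + j)]
  congr! with a
  exact weightedSum_finsetSum hθ _ fun s j => abs_stagePay_le hq hg (hσ.after a s) _ (t + j)

lemma tailPayoff_le_value_add (hθ : IsEval θ) (hσ : IsStrat σ) (t : ℕ) (hp : p ∈ ΔK K) :
    tailPayoff q g θ t σ p ≤ value q g θ p + t * variation θ := by
  have hshift := abs_weightedSum_shift_sub_le hθ (abs_stagePay_le_one hq hg hσ hp) t
  rw [one_mul] at hshift
  exact (sub_le_iff_le_add'.1 (abs_le.1 hshift).2).trans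
    (add_le_add_left (payoff_le_value hq hg hθ hσ p) _)

lemma exists_payoff_le [Nonempty A] (hθ : IsEval θ) (hδ : δ < δ')
    (hv : ∀ p ∈ ΔK K, value q g θ p ≤ value q g θ' p + δ) (hx : 0 ≤ x) (hτ : IsStrat τ) :
    ∃ τ' : Strategy A S, IsStrat τ' ∧
      payoff q g θ τ x ≤ payoff q g θ' τ' x + δ' * ∑ k, x k := by
  rcases (Finset.sum_nonneg fun k _ => hx k).lt_or_eq with hmass | hmass
  · obtain ⟨m, hm⟩ : ∃ m, m = ∑ k, x k := ⟨_, rfl⟩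
    rw [← hm] at hmass ⊢
    obtain ⟨p, hp, rfl⟩ : ∃ p ∈ ΔK K, x = m • p := by
      refine ⟨m⁻¹ • x, ⟨fun k => mul_nonneg (inv_nonneg.2 hmass.le) (hx k), ?_⟩,
        (smul_inv_smul₀ hmass.ne' x).symm⟩
      simp only [Pi.smul_apply, smul_eq_mul, ← Finset.mul_sum, ← hm]
      exact inv_mul_cancel₀ hmass.ne'
    have hlt : payoff q g θ τ p - δ' < value q g θ' p := by
      linarith [payoff_le_value hq hg hθ hτ p, hv p hp]
    obtain ⟨τ', hτ', h⟩ := exists_lt_payoff_of_lt_value hlt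
    refine ⟨τ', hτ', ?_⟩
    rw [payoff_smul, payoff_smul, mul_comm δ', ← mul_add]
    exact mul_le_mul_of_nonneg_left (sub_lt_iff_lt_add.1 h).le hmass.le
  · have hx0 : x = (0 : ℝ) • x := by
      rw [zero_smul]
      exact (Fintype.sum_eq_zero_iff_of_nonneg hx).1 hmass.symm
    refine ⟨τ, hτ, ?_⟩
    rw [← hmass, hx0, payoff_smul, payoff_smul, zero_mul, zero_mul, mul_zero, add_zero]

lemma exists_agree_tailPayoff_le [Nonempty A] (hθ : IsEval θ) (hθ' : IsEval θ') (hδ : δ < δ')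
    (hv : ∀ p ∈ ΔK K, value q g θ p ≤ value q g θ' p + δ) (t : ℕ) (hx : 0 ≤ x) (hτ : IsStrat τ) :
    ∃ τ' : Strategy A S, IsStrat τ' ∧ Agree t τ' τ ∧
      tailPayoff q g θ t τ x ≤ tailPayoff q g θ' t τ' x + δ' * ∑ k, x k := by
  induction t generalizing x τ with
  | zero =>
    obtain ⟨τ', hτ', h⟩ := exists_payoff_le hq hg hθ hδ hv hx hτ
    rw [← tailPayoff_zero, ← tailPayoff_zero] at h
    exact ⟨τ', hτ', agree_zero τ' τ, h⟩
  | succ t ih =>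
    choose T hT hagree hle using fun a s => ih (nextBelief_nonneg hq hx a s) (hτ.after a s)
    have hglue : IsStrat (glue (τ []) T) := .glue (hτ []) hT
    refine ⟨glue (τ []) T, hglue, .glue hagree, sub_le_iff_le_add'.1 ?_⟩
    rw [tailPayoff_succ hq hg hθ hτ, tailPayoff_succ hq hg hθ' hglue, glue, ← mean_sub]
    refine (mean_mono (hτ []) fun a => ?_).trans_eq (mean_const (hτ []) _)
    rw [← Finset.sum_sub_distrib, ← sum_nextBelief hq x a, Finset.mul_sum]
    exact Finset.sum_le_sum fun s _ => sub_le_iff_le_add'.2 (hle a s)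

/-- The `θ`-value as a point of the space of continuous functions on `Δ(K)` with the supremum
distance. -/
noncomputable def valueMap [Nonempty A] (θ : Evaluation) : BoundedContinuousFunction (ΔK K) ℝ :=
  .mkOfCompact ⟨fun p => value q g θ.1 p,
    (lipschitzWith_value hq hg θ.2).continuous.comp continuous_subtype_val⟩

lemma isCompact_closure_range_valueMap [Nonempty A] :
    IsCompact (closure (range (valueMap hq hg))) := by
  refine BoundedContinuousFunction.arzela_ascoli (Icc 0 1) isCompact_Icc _ ?_ ?_
  · rintro _ p ⟨θ, rfl⟩
    exact value_mem_Icc hq hg θ.2 p.2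
  · refine (LipschitzWith.uniformEquicontinuous _ (Fintype.card K) ?_).equicontinuous
    rintro ⟨_, θ, rfl⟩
    exact ((lipschitzWith_value hq hg θ.2).comp (.subtype_val (ΔK K))).weaken (mul_one _).le

end Value

section Convergence

open Filter Topology

variable {K A S : Type*} [Fintype K] [Nonempty A] {q : K → A → (S × K →₀ ℝ)} {g : K → A → ℝ}
  {z w : BoundedContinuousFunction (ΔK K) ℝ} {θ : Evaluation} {τ : Strategy A S} {δ ε : ℝ}
  (hq : ∀ k a, q k a ∈ Δf (S × K)) (hg : ∀ k a, g k a ∈ Icc (0 : ℝ) 1)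

include hq hg

lemma abs_value_sub_le_dist (hθ : dist (valueMap hq hg θ) z ≤ δ) (p : ΔK K) :
    |value q g θ.1 p - z p| ≤ δ :=
  (BoundedContinuousFunction.dist_coe_le_dist (f := valueMap hq hg θ) p).trans hθ

lemma exists_dist_valueMap_le_of_mapClusterPt (hz : MapClusterPt z patience (valueMap hq hg))
    (hε : 0 < ε) {P : Evaluation → Prop} (hP : ∀ᶠ θ in patience, P θ) :
    ∃ θ, dist (valueMap hq hg θ) z ≤ ε ∧ P θ :=
  ((hz.frequently (Metric.closedBall_mem_nhds z hε)).and_eventually hP).exists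

lemma tailPayoff_le_of_mapClusterPt (hz : MapClusterPt z patience (valueMap hq hg)) (hε : 0 < ε)
    (hθ : dist (valueMap hq hg θ) z ≤ ε) (hτ : IsStrat τ) (t : ℕ) (p : ΔK K) :
    tailPayoff q g θ.1 t τ p ≤ z p + 5 * ε := by
  have hvariation : ∀ᶠ θ' : Evaluation in patience, t * variation θ'.1 ≤ ε := by
    refine (tendsto_variation.const_mul (t : ℝ)).eventually_le_const ?_
    rwa [mul_zero]
  obtain ⟨θ', hθ', ht⟩ := exists_dist_valueMap_le_of_mapClusterPt hq hg hz hε hvariation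
  have hvalue (x : K → ℝ) (hx : x ∈ ΔK K) : value q g θ.1 x ≤ value q g θ'.1 x + 2 * ε := by
    linarith [abs_le.1 (abs_value_sub_le_dist hq hg hθ ⟨x, hx⟩),
      abs_le.1 (abs_value_sub_le_dist hq hg hθ' ⟨x, hx⟩)]
  obtain ⟨τ', hτ', -, hle⟩ := exists_agree_tailPayoff_le hq hg θ.2 θ'.2
    (by linarith : 2 * ε < 3 * ε) hvalue t p.2.1 hτ
  rw [p.2.2, mul_one] at hle
  linarith [tailPayoff_le_value_add hq hg θ'.2 hτ' t p.2,
    abs_le.1 (abs_value_sub_le_dist hq hg hθ' p)]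

lemma eventually_value_le_of_mapClusterPt (hz : MapClusterPt z patience (valueMap hq hg))
    (hε : 0 < ε) : ∀ᶠ θ : Evaluation in patience, ∀ p : ΔK K, value q g θ.1 p ≤ z p + ε := by
  have hε' : 0 < ε / 10 := by positivity
  obtain ⟨θ', hθ', -⟩ := exists_dist_valueMap_le_of_mapClusterPt hq hg hz hε'
    (Filter.eventually_true _)
  filter_upwards [eventually_weightedSum_le_of_windows_le θ'.2 zero_le_one (half_pos hε)]
    with θ hθ p
  refine value_le fun σ hσ => ?_
  refine (hθ _ (z p + ε / 2) (abs_stagePay_le_one hq hg hσ p.2) fun t => ?_).trans_eq (by ring)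
  exact (tailPayoff_le_of_mapClusterPt hq hg hz hε' hθ' hσ t p).trans_eq (by ring)

lemma le_of_mapClusterPt (hz : MapClusterPt z patience (valueMap hq hg))
    (hw : MapClusterPt w patience (valueMap hq hg)) : w ≤ z := by
  have hle (p : ΔK K) : w p ≤ z p := by
    refine le_of_forall_pos_le_add fun ε hε => ?_
    obtain ⟨θ, hdist, hle⟩ := exists_dist_valueMap_le_of_mapClusterPt hq hg hw (half_pos hε)
      (eventually_value_le_of_mapClusterPt hq hg hz (half_pos hε))
    linarith [abs_le.1 (abs_value_sub_le_dist hq hg hdist p), hle p]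
  exact hle

lemma exists_tendsto_valueMap : ∃ v, Tendsto (valueMap hq hg) patience (𝓝 v) := by
  have hcompact := isCompact_closure_range_valueMap hq hg
  have hmem : ∀ᶠ θ in patience, valueMap hq hg θ ∈ closure (range (valueMap hq hg)) :=
    Eventually.of_forall fun θ => subset_closure (mem_range_self θ)
  obtain ⟨v, -, hv⟩ := hcompact.exists_mapClusterPt_of_frequently hmem.frequently
  exact ⟨v, hcompact.tendsto_nhds_of_unique_mapClusterPt hmem fun w _ hw =>
    (le_of_mapClusterPt hq hg hv hw).antisymm (le_of_mapClusterPt hq hg hw hv)⟩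

end Convergence

section Minimax

variable {ι : Type*} {C : Set (ι → ℝ)} {b c u : ℝ}

lemma apply_single_nonpos_of_bddAbove_orthant [DecidableEq ι] (f : (ι → ℝ) →ₗ[ℝ] ℝ)
    (hf : ∀ y : ι → ℝ, (∀ i, b < y i) → f y < u) (i : ι) : f (Pi.single i 1) ≤ 0 := by
  by_contra! hi
  let base : ι → ℝ := fun _ => b + 1
  have hbase : f base < u := hf base fun _ => lt_add_one b
  let r := (u - f base) / f (Pi.single i 1)
  have hr : 0 ≤ r := div_nonneg (sub_nonneg.2 hbase.le) hi.le
  have hlt : f (base + r • Pi.single i 1) < u := by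
    refine hf _ fun j => (lt_add_one b).trans_le (le_add_of_nonneg_right ?_)
    exact mul_nonneg hr ((Pi.single_nonneg.2 zero_le_one : (0 : ι → ℝ) ≤ Pi.single i 1) j)
  rw [map_add, map_smul, smul_eq_mul, div_mul_cancel₀ _ hi.ne', add_sub_cancel] at hlt
  exact lt_irrefl u hlt

variable [Fintype ι]

lemma exists_nonneg_forall_sum_mul_le (hC : Convex ℝ C) (h : ∀ y ∈ C, ∃ i, y i ≤ b) :
    ∃ l : ι → ℝ, 0 ≤ l ∧ ∃ r, (∀ y ∈ C, ∑ i, l i * y i ≤ r) ∧ ∀ m > b, r < (∑ i, l i) * m := by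
  classical
  let O : Set (ι → ℝ) := univ.pi fun _ => Ioi b
  have hdisj : Disjoint O C := by
    refine disjoint_left.2 fun y hyO hyC => ?_
    obtain ⟨i, hi⟩ := h y hyC
    exact hi.not_gt (hyO i (mem_univ i))
  obtain ⟨f, u, hfO, hfC⟩ := geometric_hahn_banach_open (convex_pi fun _ _ => convex_Ioi b)
    (isOpen_set_pi finite_univ fun _ _ => isOpen_Ioi) hC hdisj
  replace hfO (y : ι → ℝ) (hy : ∀ i, b < y i) : f y < u := hfO y fun i _ => hy i
  let l (i : ι) : ℝ := -f (Pi.single i 1)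
  have hl (i : ι) : 0 ≤ l i :=
    neg_nonneg.2 (apply_single_nonpos_of_bddAbove_orthant f.toLinearMap hfO i)
  have hfl (y : ι → ℝ) : ∑ i, l i * y i = -f y := by
    conv_rhs => rw [← Finset.univ_sum_single y, map_sum, ← Finset.sum_neg_distrib]
    refine Finset.sum_congr rfl fun i _ => ?_
    rw [← mul_one (y i), ← smul_eq_mul (y i), Pi.single_smul, map_smul, smul_eq_mul, smul_eq_mul,
      mul_one, neg_mul, mul_comm]
  refine ⟨l, hl, -u, fun y hy => (hfl y).trans_le (neg_le_neg (hfC y hy)), fun m hm => ?_⟩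
  rw [Finset.sum_mul, hfl]
  exact neg_lt_neg (hfO _ fun _ => hm)

lemma exists_mem_stdSimplex_sum_mul_le (hC : Convex ℝ C) (hne : C.Nonempty)
    (h : ∀ y ∈ C, ∃ i, y i ≤ b) : ∃ w ∈ stdSimplex ℝ ι, ∀ y ∈ C, ∑ i, w i * y i ≤ b := by
  obtain ⟨l, hl, r, hlC, hconst⟩ := exists_nonneg_forall_sum_mul_le hC h
  have hmass : 0 < ∑ i, l i := by
    refine (Finset.sum_nonneg fun i _ => hl i).lt_of_ne fun h0 => ?_
    obtain ⟨y, hy⟩ := hne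
    have hu := hconst (b + 1) (lt_add_one b)
    have hly := hlC y hy
    simp only [(Fintype.sum_eq_zero_iff_of_nonneg hl).1 h0.symm, Pi.zero_apply, zero_mul,
      Finset.sum_const_zero] at hu hly
    exact hu.not_ge hly
  refine ⟨(∑ i, l i)⁻¹ • l, ⟨fun i => mul_nonneg (inv_nonneg.2 hmass.le) (hl i), ?_⟩, ?_⟩
  · simp only [Pi.smul_apply, smul_eq_mul, ← Finset.mul_sum]
    exact inv_mul_cancel₀ hmass.ne'
  · intro y hy
    simp only [Pi.smul_apply, smul_eq_mul, mul_assoc, ← Finset.mul_sum]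
    rw [inv_mul_le_iff₀ hmass]
    refine (hlC y hy).trans ((div_le_iff₀' hmass).1 ?_)
    refine le_of_forall_gt_imp_ge_of_dense fun m hm => ?_
    exact ((div_lt_iff₀' hmass).2 (hconst m hm)).le

lemma exists_forall_lt_of_forall_mem_stdSimplex [Nonempty ι] (hC : Convex ℝ C) (hbc : b < c)
    (h : ∀ w ∈ stdSimplex ℝ ι, ∃ y ∈ C, c ≤ ∑ i, w i * y i) : ∃ y ∈ C, ∀ i, b < y i := by
  classical
  by_contra! hle
  obtain ⟨y₀, hy₀, -⟩ := h _ (single_mem_stdSimplex ℝ (Classical.arbitrary ι))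
  obtain ⟨w, hw, hwC⟩ := exists_mem_stdSimplex_sum_mul_le hC ⟨y₀, hy₀⟩ hle
  obtain ⟨y, hy, hcy⟩ := h w hw
  exact (hbc.trans_le hcy).not_ge (hwC y hy)

end Minimax

section Securing

open Filter Topology

variable {K A S : Type*} [Fintype K] {q : K → A → (S × K →₀ ℝ)} {g : K → A → ℝ}
  {θ : ℕ → ℝ} {σ τ : Strategy A S} {p : K → ℝ} {α b b' δ ε : ℝ} {N t : ℕ}

/-- Whatever the evaluation in `patient α`, the first `t` stages of `σ` can be continued so as to
guarantee the payoff `b` from stage `t` on; the continuation may depend on the evaluation. -/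
def CanSecure (q : K → A → (S × K →₀ ℝ)) (g : K → A → ℝ) (p : K → ℝ) (α : ℝ) (t : ℕ) (b : ℝ)
    (σ : Strategy A S) : Prop :=
  ∀ θ ∈ patient α, ∃ τ : Strategy A S, IsStrat τ ∧ Agree t τ σ ∧ b ≤ tailPayoff q g θ t τ p

lemma canSecure_zero [Nonempty A] (h : ∀ θ ∈ patient α, b < value q g θ p) (σ : Strategy A S) :
    CanSecure q g p α 0 b σ := by
  intro θ hθ
  obtain ⟨τ, hτ, hb⟩ := exists_lt_payoff_of_lt_value (h θ hθ)
  exact ⟨τ, hτ, agree_zero τ σ, by rw [tailPayoff_zero]; exact hb.le⟩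

variable (hq : ∀ k a, q k a ∈ Δf (S × K)) (hg : ∀ k a, g k a ∈ Icc (0 : ℝ) 1)

include hq hg

lemma tailPayoff_mix {l : ℝ} (hl : l ∈ Icc (0 : ℝ) 1) (hθ : IsEval θ) (hσ : IsStrat σ)
    (hτ : IsStrat τ) (t : ℕ) (x : K → ℝ) :
    tailPayoff q g θ t (mix l σ τ) x =
      l * tailPayoff q g θ t σ x + (1 - l) * tailPayoff q g θ t τ x := by
  have habs {ρ : Strategy A S} (hρ : IsStrat ρ) (r : ℝ) (j : ℕ) :
      |r * stagePay q g ρ x (t + j)| ≤ |r| * ∑ k, |x k| := by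
    rw [abs_mul]
    exact mul_le_mul_of_nonneg_left (abs_stagePay_le hq hg hρ x _) (abs_nonneg r)
  simp only [tailPayoff, stagePay_mix hl hσ hτ]
  rw [weightedSum_add hθ (habs hσ l) (habs hτ (1 - l)), weightedSum_mul_left, weightedSum_mul_left]

lemma tailPayoff_iterate_delay (hθ : IsEval θ) (hσ : IsStrat σ) (t n : ℕ) (x : K → ℝ) :
    tailPayoff q g (delay^[n] θ) t σ x = tailPayoff q g θ (t + n) σ x := by
  simp only [tailPayoff, add_assoc]
  exact weightedSum_iterate_delay hθ (fun j => abs_stagePay_le hq hg hσ x (t + j)) n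

lemma convex_image_tailPayoff {ι : Type*} {ϑ : ι → ℕ → ℝ} (hϑ : ∀ i, IsEval (ϑ i)) (t : ℕ)
    (σ : Strategy A S) (x : K → ℝ) :
    Convex ℝ ((fun τ i => tailPayoff q g (ϑ i) t τ x) '' {τ | IsStrat τ ∧ Agree t τ σ}) := by
  rintro _ ⟨τ, ⟨hτ, hτσ⟩, rfl⟩ _ ⟨τ', ⟨hτ', hτσ'⟩, rfl⟩ l l' hl hl' hsum
  obtain rfl : l' = 1 - l := eq_sub_of_add_eq' hsum
  have hl : l ∈ Icc (0 : ℝ) 1 := ⟨hl, sub_nonneg.1 hl'⟩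
  exact ⟨mix l τ τ', ⟨.mix hl hτ hτ', .mix l hτσ hτσ'⟩,
    funext fun i => tailPayoff_mix hq hg hl (hϑ i) hτ hτ' t x⟩

lemma CanSecure.exists_forall_lt_tailPayoff (h : CanSecure q g p α t b σ) (hb : b' < b)
    {E : Set (ℕ → ℝ)} (hfin : E.Finite) (hne : E.Nonempty) (hE : E ⊆ patient α) :
    ∃ τ : Strategy A S, IsStrat τ ∧ Agree t τ σ ∧ ∀ θ ∈ E, b' < tailPayoff q g θ t τ p := by
  have := hfin.fintype
  have := hne.to_subtype
  have hϑ (θ : E) : IsEval θ.1 := (hE θ.2).1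
  obtain ⟨_, ⟨τ, ⟨hτ, hτσ⟩, rfl⟩, hlt⟩ := exists_forall_lt_of_forall_mem_stdSimplex
    (convex_image_tailPayoff hq hg hϑ t σ p) hb <| by
      intro w hw
      obtain ⟨τ, hτ, hτσ, hle⟩ :=
        h _ ((convex_patient α).sum_mem (fun θ _ => hw.1 θ) hw.2 fun θ _ => hE θ.2)
      refine ⟨_, ⟨τ, ⟨hτ, hτσ⟩, rfl⟩, hle.trans_eq ?_⟩
      exact weightedSum_sum_smul _ w hϑ fun j => abs_stagePay_le hq hg hτ p (t + j)
  exact ⟨τ, hτ, hτσ, fun θ hθ => hlt ⟨θ, hθ⟩⟩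

lemma exists_finite_subset_patient_value_le [Nonempty A] (α : ℝ) (hδ : 0 < δ) :
    ∃ F ⊆ patient α, F.Finite ∧
      ∀ θ ∈ patient α, ∃ θ' ∈ F, ∀ p ∈ ΔK K, value q g θ' p ≤ value q g θ p + δ := by
  have hbdd : TotallyBounded (valueMap hq hg '' {θ | variation θ.1 ≤ α}) :=
    (isCompact_closure_range_valueMap hq hg).totallyBounded.subset
      ((image_subset_range _ _).trans subset_closure)
  obtain ⟨_, hsub, hfin, hcover⟩ := Metric.finite_approx_of_totallyBounded hbdd δ hδ
  obtain ⟨F, hF, hFfin, rfl⟩ := exists_subset_image_finite_and.1 ⟨_, hsub, hfin, rfl⟩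
  refine ⟨Subtype.val '' F, ?_, hFfin.image _, fun θ hθ => ?_⟩
  · rintro _ ⟨θ, hθ, rfl⟩
    exact ⟨θ.2, hF hθ⟩
  · obtain ⟨_, ⟨θ', hθ', rfl⟩, hdist⟩ := mem_iUnion₂.1 (hcover ⟨⟨θ, hθ.1⟩, hθ.2, rfl⟩)
    refine ⟨θ', mem_image_of_mem _ hθ', fun p hp => ?_⟩
    have hclose : |value q g θ p - value q g θ' p| ≤ δ :=
      abs_value_sub_le_dist hq hg (Metric.mem_ball.1 hdist).le ⟨p, hp⟩
    linarith [(abs_le.1 hclose).1]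

lemma CanSecure.exists_block [Nonempty A] (h : CanSecure q g p α t b σ) (hb : b' < b)
    (hN : 0 < N) (huniform : uniform N ∈ patient α) (hp : p ∈ ΔK K) :
    ∃ τ : Strategy A S, IsStrat τ ∧ Agree t τ σ ∧
      N * b' ≤ ∑ j ∈ Finset.range N, stagePay q g τ p (t + j) ∧
      CanSecure q g p α (t + N) b' τ := by
  obtain ⟨c, hbc, hcb⟩ := exists_between hb
  obtain ⟨F, hF, hfin, hnet⟩ :=
    exists_finite_subset_patient_value_le hq hg α (half_pos (sub_pos.2 hbc))
  have hE : insert (uniform N) (delay^[N] '' F) ⊆ patient α := by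
    refine insert_subset huniform (image_subset_iff.2 fun θ hθ => ?_)
    exact iterate_delay_mem_patient (hF hθ) N
  obtain ⟨τ, hτ, hτσ, hlt⟩ := h.exists_forall_lt_tailPayoff hq hg hcb
    ((hfin.image _).insert _) (insert_nonempty _ _) hE
  refine ⟨τ, hτ, hτσ, ?_, fun θ hθ => ?_⟩
  · have hmean := hlt _ (mem_insert _ _)
    rw [tailPayoff, weightedSum_uniform, lt_inv_mul_iff₀ (Nat.cast_pos.2 hN)] at hmean
    exact (mul_le_mul_of_nonneg_left hbc.le N.cast_nonneg).trans hmean.le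
  · obtain ⟨θ', hθ', hvalue⟩ := hnet θ hθ
    have hdelay := hlt _ (mem_insert_of_mem _ (mem_image_of_mem _ hθ'))
    rw [tailPayoff_iterate_delay hq hg (hF hθ').1 hτ] at hdelay
    obtain ⟨τ', hτ', hagree, hle⟩ := exists_agree_tailPayoff_le hq hg (hF hθ').1 hθ.1
      (half_lt_self (sub_pos.2 hbc)) hvalue (t + N) hp.1 hτ
    rw [hp.2, mul_one] at hle
    exact ⟨τ', hτ', hagree, by linarith⟩

lemma exists_isStrat_forall_block_le [Nonempty A] (h : ∀ θ ∈ patient α, b < value q g θ p)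
    (hb : b' < b) (hN : 0 < N) (huniform : uniform N ∈ patient α) (hp : p ∈ ΔK K) :
    ∃ σ : Strategy A S, IsStrat σ ∧
      ∀ i, N * b' ≤ ∑ j ∈ Finset.range N, stagePay q g σ p (i * N + j) := by
  let Secures (i : ℕ) (σ : Strategy A S) : Prop :=
    IsStrat σ ∧ ∃ c > b', CanSecure q g p α (i * N) c σ
  have hstep (i : ℕ) (σ : Strategy A S) (hσ : Secures i σ) : ∃ τ, Secures (i + 1) τ ∧
      Agree (i * N) τ σ ∧ N * b' ≤ ∑ j ∈ Finset.range N, stagePay q g τ p (i * N + j) := by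
    obtain ⟨-, c, hc, hsecure⟩ := hσ
    obtain ⟨c', hbc', hcc'⟩ := exists_between hc
    obtain ⟨τ, hτ, hagree, hblock, hsecure'⟩ := hsecure.exists_block hq hg hcc' hN huniform hp
    rw [← Nat.succ_mul] at hsecure'
    exact ⟨τ, ⟨hτ, c', hbc', hsecure'⟩, hagree,
      (mul_le_mul_of_nonneg_left hbc'.le N.cast_nonneg).trans hblock⟩
  choose! next hnext hagree hblock using hstep
  obtain ⟨σ₀, hσ₀⟩ := exists_isStrat A S
  let s : ℕ → Strategy A S := Nat.rec σ₀ next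
  have hs : ∀ i, Secures i (s i) := by
    have hzero : CanSecure q g p α (0 * N) b σ₀ := by
      rw [zero_mul]
      exact canSecure_zero h σ₀
    exact Nat.rec ⟨hσ₀, b, hb, hzero⟩ fun i hi => hnext i (s i) hi
  obtain ⟨σ, hσ, hσs⟩ :=
    exists_isStrat_agree_of_chain hN (fun i => (hs i).1) fun i => hagree i (s i) (hs i)
  refine ⟨σ, hσ, fun i => (hblock i (s i) (hs i)).trans_eq (Finset.sum_congr rfl fun j hj => ?_)⟩
  refine ((hσs (i + 1)).stagePay_eq ?_ q g p).symm
  rw [Nat.succ_mul]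
  exact Nat.add_lt_add_left (Finset.mem_range.1 hj) _

lemma exists_strategies_eventually_le_payoff [Nonempty A]
    {v : BoundedContinuousFunction (ΔK K) ℝ} (hv : Tendsto (valueMap hq hg) patience (𝓝 v))
    (hε : 0 < ε) : ∃ σ : (K → ℝ) → Strategy A S, (∀ p, IsStrat (σ p)) ∧
      ∀ᶠ θ : Evaluation in patience, ∀ p : ΔK K, v p - ε ≤ payoff q g θ.1 (σ p) p := by
  obtain ⟨α, hα, hclose⟩ := eventually_patience.1
    (hv.eventually (Metric.closedBall_mem_nhds v (by positivity : 0 < ε / 4)))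
  obtain ⟨N, hN, huniform⟩ := exists_uniform_mem_patient hα
  have hgood (p : K → ℝ) : ∃ σ : Strategy A S, IsStrat σ ∧ ∀ hp : p ∈ ΔK K, ∀ i,
      N * (v ⟨p, hp⟩ - ε / 2) ≤ ∑ j ∈ Finset.range N, stagePay q g σ p (i * N + j) := by
    by_cases hp : p ∈ ΔK K
    · have hvalue (θ) (hθ : θ ∈ patient α) : v ⟨p, hp⟩ - ε / 3 < value q g θ p := by
        have := abs_le.1 (abs_value_sub_le_dist hq hg (hclose ⟨θ, hθ.1⟩ hθ.2) ⟨p, hp⟩)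
        linarith
      obtain ⟨σ, hσ, hblock⟩ := exists_isStrat_forall_block_le hq hg hvalue
        (by linarith : v ⟨p, hp⟩ - ε / 2 < _) hN huniform hp
      exact ⟨σ, hσ, fun _ => hblock⟩
    · obtain ⟨σ, hσ⟩ := exists_isStrat A S
      exact ⟨σ, hσ, fun h => absurd h hp⟩
  choose σ hσ hblock using hgood
  refine ⟨σ, hσ, ?_⟩
  filter_upwards [eventually_sub_le_weightedSum_of_blocks hN
    (by positivity : 0 ≤ ‖v‖ + ε / 2) zero_le_one (half_pos hε)] with θ hθ p
  have hb : |v p - ε / 2| ≤ ‖v‖ + ε / 2 :=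
    (abs_sub _ _).trans (add_le_add (v.norm_coe_le_norm p) (abs_of_pos (half_pos hε)).le)
  calc v p - ε = v p - ε / 2 - ε / 2 := by ring
    _ ≤ payoff q g θ.1 (σ p) p :=
        hθ _ _ (abs_stagePay_le_one hq hg (hσ p) p.2) hb (hblock p p.2)

end Securing

end Stmt18

/-- **Theorem 5 (Renault–Venel).** Every POMDP with finitely many states has a general
uniform value: there is `v* : Δ(K) → ℝ` such that for each `ε > 0` there are `α > 0`
and, for each initial probability `p`, a behavioral strategy `σ(p)`, with
`|v_θ(p) − v*(p)| ≤ ε` and `γ_θ(p, σ(p)) ≥ v*(p) − ε` for every evaluation `θ` such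
that `I(θ) ≤ α` and every `p ∈ Δ(K)`. -/
theorem stmt18 (K A S : Type*) [Fintype K] [Nonempty K] [Nonempty A] [Nonempty S]
    (q : K → A → (S × K →₀ ℝ)) (hq : ∀ k a, q k a ∈ Stmt18.Δf (S × K))
    (g : K → A → ℝ) (hg : ∀ k a, g k a ∈ Icc (0:ℝ) 1) :
    ∃ vstar : (K → ℝ) → ℝ,
      ∀ ε > (0:ℝ), ∃ α > (0:ℝ),
        ∃ σ : (K → ℝ) → (List (A × S) → (A →₀ ℝ)), (∀ p, Stmt18.IsStrat (σ p)) ∧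
        ∀ θ : ℕ → ℝ, Stmt18.IsEval θ → Stmt18.impatience θ ≤ α →
          ∀ p ∈ Stmt18.ΔK K,
            |Stmt18.value q g θ p - vstar p| ≤ ε ∧
            Stmt18.payoff q g θ (σ p) p ≥ vstar p - ε := by
  open Stmt18 in
  obtain ⟨v, hv⟩ := exists_tendsto_valueMap hq hg
  refine ⟨Function.extend Subtype.val v 0, fun ε hε => ?_⟩
  obtain ⟨σ, hσ, hpayoff⟩ := exists_strategies_eventually_le_payoff hq hg hv hε
  obtain ⟨α, hα, h⟩ := eventually_patience.1
    ((hv.eventually (Metric.closedBall_mem_nhds v hε)).and hpayoff)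
  refine ⟨α / 2, half_pos hα, σ, hσ, fun θ hθ hI p hp => ?_⟩
  obtain ⟨hdist, hle⟩ := h ⟨θ, hθ⟩ (by linarith [variation_le_two_mul_impatience hθ])
  have hext : Function.extend Subtype.val v 0 p = v ⟨p, hp⟩ :=
    Subtype.val_injective.extend_apply v 0 ⟨p, hp⟩
  rw [hext]
  exact ⟨abs_value_sub_le_dist hq hg hdist ⟨p, hp⟩, hle ⟨p, hp⟩⟩
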